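/- arXiv:1705.01221 — 5 statements merged into one kernel-verified Lean document; each statement's English description precedes it below -/
import Mathlib

section
/- With A = k ⊗_{𝔽_q} L and σ the Frobenius-on-the-first-factor map, let ζ ∈ L satisfy ζ^r = 1, and for a ∈ k set θ_a = Σ_{i=0}^{r−1} a^{q^i} ⊗ ζ^{−(i+1)} ∈ A. Then: (i) for every a ∈ k, σ(θ_a) = (1 ⊗ ζ)·θ_a; (ii) the 𝔽_q-linear map a ↦ θ_a is not identically zero on k. In particular there exists a ∈ k with θ_a ≠ 0 and σ(θ_a) = (1 ⊗ ζ)·θ_a (a solution to Hilbert's theorem 90 for σ and ζ). -/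
open scoped TensorProduct

/-- The element `θ_a = ∑_{i=0}^{r−1} a^{q^i} ⊗ ζ^{−(i+1)}` of `A = k ⊗_{𝔽_q} L`
(written here in the tensor algebra `L ⊗[F] k`). -/
noncomputable def hilbert90Elt {F k L : Type*} [Field F] [Field k] [Field L]
    [Algebra F k] [Algebra F L] (q r : ℕ) (ζ : L) (a : k) : L ⊗[F] k :=
  ∑ i ∈ Finset.range r, (ζ⁻¹ ^ (i + 1)) ⊗ₜ[F] (a ^ q ^ i)

/-!
Let `τ` be the `q`-power Frobenius of `k`, so that `σ = id ⊗ τ`, and put `g_i = ζ^{-i} ⊗ τ^i a`.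
Then `σ(θ_a) = ∑_{i<r} g_{i+1}` while `(1 ⊗ ζ) θ_a = ∑_{i<r} g_i`, and the two sums agree because
`τ ^ r = 1` and `ζ ^ r = 1` give `g_r = g_0`. If `θ_a` vanished for all `a`, then every
`𝔽_q`-linear functional `φ` on `L` would give a relation `∑_{i<r} φ(ζ^{-(i+1)}) τ^i = 0`. The `r`
powers of `τ` are distinct automorphisms of `k`, so Dedekind's independence of characters forces
`φ(ζ^{-(i+1)}) = 0` for every `φ`, contradicting `ζ ≠ 0`.
-/

section Resolvent

variable {R A M : Type*} [CommRing R] [CommRing A] [Algebra R A] [AddCommGroup M] [Module R M]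

/-- The Lagrange resolvent `a ↦ ∑_{i<r} ζ^{-(i+1)} ⊗ τ^i a` of a linear endomorphism `τ` of `M`,
a source of eigenvectors of `id ⊗ τ` with eigenvalue `ζ`. Taking the exponents `-(i+1)` rather than
`-i` only multiplies it by `ζ⁻¹`. -/
noncomputable def lagrangeResolvent (τ : Module.End R M) (r : ℕ) (ζ : Aˣ) : M →ₗ[R] A ⊗[R] M :=
  ∑ i ∈ Finset.range r, TensorProduct.mk R A M ((ζ⁻¹ ^ (i + 1) : Aˣ) : A) ∘ₗ τ ^ i

theorem lagrangeResolvent_apply (τ : Module.End R M) (r : ℕ) (ζ : Aˣ) (a : M) :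
    lagrangeResolvent τ r ζ a =
      ∑ i ∈ Finset.range r, ((ζ⁻¹ ^ (i + 1) : Aˣ) : A) ⊗ₜ[R] (τ ^ i) a := by
  simp [lagrangeResolvent]

theorem baseChange_lagrangeResolvent {τ : Module.End R M} {r : ℕ} {ζ : Aˣ}
    (hτ : τ ^ r = 1) (hζ : ζ ^ r = 1) (a : M) :
    τ.baseChange A (lagrangeResolvent τ r ζ a) = (ζ : A) • lagrangeResolvent τ r ζ a := by
  let term (i : ℕ) : A ⊗[R] M := ((ζ⁻¹ ^ i : Aˣ) : A) ⊗ₜ (τ ^ i) a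
  have baseChange_eq : τ.baseChange A (lagrangeResolvent τ r ζ a) =
      ∑ i ∈ Finset.range r, term (i + 1) := by
    simp [lagrangeResolvent_apply, term, pow_succ' τ]
  have smul_eq : (ζ : A) • lagrangeResolvent τ r ζ a = ∑ i ∈ Finset.range r, term i := by
    simp [lagrangeResolvent_apply, term, Finset.smul_sum, TensorProduct.smul_tmul', pow_succ']
  have term_cyclic : term r = term 0 := by simp only [term, inv_pow, hτ, hζ, pow_zero, inv_one]
  rw [baseChange_eq, smul_eq, ← sub_eq_zero, ← Finset.sum_sub_distrib, Finset.sum_range_sub,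
    term_cyclic, sub_self]

end Resolvent

theorem eq_zero_of_forall_sum_tmul_eq_zero {R P M N ι : Type*} [CommRing R]
    [AddCommGroup P] [Module R P] [Module.Projective R P] [AddCommGroup M] [Module R M]
    [AddCommGroup N] [Module R N] {s : Finset ι} {f : ι → M →ₗ[R] N} {c : ι → P}
    (hf : LinearIndepOn R f s) (h : ∀ a, ∑ i ∈ s, c i ⊗ₜ[R] f i a = 0) :
    ∀ i ∈ s, c i = 0 := by
  intro i hi
  rw [← Module.forall_dual_apply_eq_zero_iff R]
  intro φ
  have relation : ∑ j ∈ s, φ (c j) • f j = 0 := by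
    ext a
    simpa using congrArg (TensorProduct.lid R N ∘ φ.rTensor N) (h a)
  exact linearIndepOn_finset_iff.mp hf (fun j ↦ φ (c j)) relation i hi

theorem lagrangeResolvent_ne_zero {R A M : Type*} [CommRing R] [CommRing A] [Nontrivial A]
    [Algebra R A] [Module.Projective R A] [AddCommGroup M] [Module R M] {τ : Module.End R M}
    {r : ℕ} (hr : 0 < r) (hτ : LinearIndepOn R (fun i ↦ τ ^ i) (Finset.range r : Set ℕ)) (ζ : Aˣ) :
    lagrangeResolvent τ r ζ ≠ 0 := by
  intro h
  have coeff_eq_zero := eq_zero_of_forall_sum_tmul_eq_zero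
    (c := fun i ↦ ((ζ⁻¹ ^ (i + 1) : Aˣ) : A)) hτ
    (fun a ↦ by rw [← lagrangeResolvent_apply, h, LinearMap.zero_apply])
  exact Units.ne_zero _ (coeff_eq_zero 0 (Finset.mem_range.mpr hr))

theorem linearIndepOn_pow_algHom_toLinearMap {R S : Type*} [CommRing R] [IsDomain R] [CommRing S]
    [IsDomain S] [Algebra R S] [Module.IsTorsionFree R S] (τ : S →ₐ[R] S) :
    LinearIndepOn R (fun i ↦ τ.toLinearMap ^ i) (Finset.range (orderOf τ) : Set ℕ) := by
  have powers_injective : Set.InjOn (τ ^ ·) (Finset.range (orderOf τ) : Set ℕ) := by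
    simpa using pow_injOn_Iio_orderOf (x := τ)
  simpa [LinearIndepOn, Function.comp_def, ← AlgHom.toEnd_apply, ← map_pow] using!
    (linearIndependent_algHom_toLinearMap' R S S).comp _ powers_injective.injective

section Frobenius

variable {F k L : Type*} [Field F] [Fintype F] [Field k] [Field L] [Algebra F k] [Algebra F L]

theorem hilbert90Elt_eq_lagrangeResolvent (r : ℕ) (ζ : Lˣ) (a : k) :
    hilbert90Elt (F := F) (Fintype.card F) r (ζ : L) a =
      lagrangeResolvent (FiniteField.frobeniusAlgHom F k).toLinearMap r ζ a := by
  simp [hilbert90Elt, lagrangeResolvent_apply, Module.End.coe_pow,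
    FiniteField.coe_frobeniusAlgHom, pow_iterate]

theorem frobeniusAlgHom_toLinearMap_pow_finrank [FiniteDimensional F k] :
    (FiniteField.frobeniusAlgHom F k).toLinearMap ^ Module.finrank F k = 1 := by
  have := Module.finite_of_finite F (M := k)
  rw [← FiniteField.orderOf_frobeniusAlgHom, ← AlgHom.toEnd_apply, ← map_pow, pow_orderOf_eq_one,
    map_one]

theorem exists_hilbert90Elt_ne_zero [FiniteDimensional F k] (ζ : Lˣ) :
    ∃ a : k, hilbert90Elt (F := F) (Fintype.card F) (Module.finrank F k) (ζ : L) a ≠ 0 := by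
  have := Module.finite_of_finite F (M := k)
  have powers_independent :=
    linearIndepOn_pow_algHom_toLinearMap (FiniteField.frobeniusAlgHom F k)
  rw [FiniteField.orderOf_frobeniusAlgHom] at powers_independent
  simpa only [hilbert90Elt_eq_lagrangeResolvent, LinearMap.zero_apply] using
    DFunLike.ne_iff.mp (lagrangeResolvent_ne_zero Module.finrank_pos powers_independent ζ)

end Frobenius

theorem stmt_3_general {F k L : Type*} [Field F] [Fintype F] [Field k] [Field L]
    [Algebra F k] [Algebra F L] [FiniteDimensional F k]
    (q r : ℕ) (hq : Fintype.card F = q) (hr : Module.finrank F k = r)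
    (σ : (L ⊗[F] k) →ₐ[L] (L ⊗[F] k))
    (hσ : ∀ (c : L) (x : k), σ (c ⊗ₜ[F] x) = c ⊗ₜ[F] (x ^ q))
    (ζ : L) (hζ : ζ ^ r = 1) :
    (∀ a : k, σ (hilbert90Elt (F := F) q r ζ a) =
        algebraMap L (L ⊗[F] k) ζ * hilbert90Elt (F := F) q r ζ a) ∧
    (∃ a : k, hilbert90Elt (F := F) q r ζ a ≠ 0) ∧
    (∃ a : k, hilbert90Elt (F := F) q r ζ a ≠ 0 ∧
      σ (hilbert90Elt (F := F) q r ζ a) =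
        algebraMap L (L ⊗[F] k) ζ * hilbert90Elt (F := F) q r ζ a) := by
  subst hq hr
  lift ζ to Lˣ using IsUnit.of_pow_eq_one hζ Module.finrank_pos.ne'
  have hζ_units : ζ ^ Module.finrank F k = 1 := Units.ext (by simpa using hζ)
  have σ_eq : σ.toLinearMap = (FiniteField.frobeniusAlgHom F k).toLinearMap.baseChange L := by
    ext x
    simp [hσ]
  have eigen (a : k) : σ (hilbert90Elt (F := F) (Fintype.card F) (Module.finrank F k) (ζ : L) a) =
      algebraMap L (L ⊗[F] k) ζ *
        hilbert90Elt (F := F) (Fintype.card F) (Module.finrank F k) (ζ : L) a := by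
    rw [hilbert90Elt_eq_lagrangeResolvent, ← AlgHom.toLinearMap_apply, σ_eq, ← Algebra.smul_def,
      baseChange_lagrangeResolvent frobeniusAlgHom_toLinearMap_pow_finrank hζ_units]
  obtain ⟨a, ha⟩ := exists_hilbert90Elt_ne_zero (F := F) (k := k) ζ
  exact ⟨eigen, ⟨a, ha⟩, a, ha, eigen a⟩

/-- With `A = k ⊗_{𝔽_q} L` and `σ` the Frobenius on the `k`-factor, and
`ζ ∈ L` with `ζ^r = 1`: (i) `σ(θ_a) = (1 ⊗ ζ)·θ_a` for all `a ∈ k`; (ii) the `𝔽_q`-linear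
map `a ↦ θ_a` is not identically zero; in particular some `a` gives a nonzero solution of
Hilbert's theorem 90 for `σ` and `ζ`. -/
theorem stmt_3 {F k L : Type*} [Field F] [Fintype F] [Field k] [Field L]
    [Algebra F k] [Algebra F L] [FiniteDimensional F k] [FiniteDimensional F L]
    (q r : ℕ) (hq : Fintype.card F = q) (hr : Module.finrank F k = r)
    (σ : (L ⊗[F] k) →ₐ[L] (L ⊗[F] k))
    (hσ : ∀ (c : L) (x : k), σ (c ⊗ₜ[F] x) = c ⊗ₜ[F] (x ^ q))
    (ζ : L) (hζ : ζ ^ r = 1) :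
    (∀ a : k, σ (hilbert90Elt (F := F) q r ζ a) =
        algebraMap L (L ⊗[F] k) ζ * hilbert90Elt (F := F) q r ζ a) ∧
    (∃ a : k, hilbert90Elt (F := F) q r ζ a ≠ 0) ∧
    (∃ a : k, hilbert90Elt (F := F) q r ζ a ≠ 0 ∧
      σ (hilbert90Elt (F := F) q r ζ a) = algebraMap L (L ⊗[F] k) ζ * hilbert90Elt (F := F) q r ζ a) :=
  stmt_3_general q r hq hr σ hσ ζ hζ
end

section
/- The map σ : A → A determined by σ(x ⊗ c) = x^q ⊗ c is an automorphism of A = k ⊗_{𝔽_q} L as an L-algebra, and its fixed subalgebra {θ ∈ A : σ(θ) = θ} is exactly 1 ⊗ L, the canonical image of L in A. -/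
open scoped TensorProduct

/-!
The map `σ` is the base change to `L` of the Frobenius `x ↦ x ^ q` of `k`, hence bijective as soon
as the latter is. Base change along a flat algebra commutes with equalizers, so the fixed
subalgebra of `σ` is the base change of the fixed subalgebra of the Frobenius. In a domain that one
is the image of `F`, because `x ^ q - x = ∏ a : F, (x - a)`, and the base change of `F` is `L`.
-/

section FixedPoints

variable (F : Type*) [Field F] [Fintype F]

open Polynomial in
theorem X_pow_card_sub_X_eq_prod : (X ^ Fintype.card F - X : F[X]) = ∏ a : F, (X - C a) := by
  have monic : (X ^ Fintype.card F - X : F[X]).Monic :=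
    monic_X_pow_sub (by simpa only [degree_X] using mod_cast Fintype.one_lt_card)
  have card_roots :
      (X ^ Fintype.card F - X : F[X]).roots.card = (X ^ Fintype.card F - X : F[X]).natDegree := by
    rw [FiniteField.roots_X_pow_card_sub_X,
      FiniteField.X_pow_card_sub_X_natDegree_eq F Fintype.one_lt_card, Finset.card_val,
      Finset.card_univ]
  rw [← prod_multiset_X_sub_C_of_monic_of_roots_card_eq monic card_roots,
    FiniteField.roots_X_pow_card_sub_X, Finset.prod_map_val]

variable {R : Type*} [CommRing R] [Algebra F R]

theorem pow_card_sub_self_eq_prod (x : R) :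
    x ^ Fintype.card F - x = ∏ a : F, (x - algebraMap F R a) := by
  simpa using congrArg (Polynomial.aeval x) (X_pow_card_sub_X_eq_prod F)

variable (R) in
theorem equalizer_frobeniusAlgHom_id [IsDomain R] :
    AlgHom.equalizer (FiniteField.frobeniusAlgHom F R) (AlgHom.id F R) = ⊥ := by
  ext x
  calc x ∈ AlgHom.equalizer (FiniteField.frobeniusAlgHom F R) (AlgHom.id F R)
    _ ↔ x ^ Fintype.card F - x = 0 := sub_eq_zero.symm
    _ ↔ ∃ a : F, x = algebraMap F R a := by
      simp only [pow_card_sub_self_eq_prod F, Finset.prod_eq_zero_iff, Finset.mem_univ, true_and,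
        sub_eq_zero]
    _ ↔ x ∈ (⊥ : Subalgebra F R) := by simp only [Algebra.mem_bot, Set.mem_range, eq_comm]

end FixedPoints

section BaseChange

variable {R B C : Type*} (A : Type*)

theorem subalgebra_baseChange_bot [CommSemiring R] [CommSemiring A] [Semiring B] [Algebra R A]
    [Algebra R B] :
    (⊥ : Subalgebra R B).baseChange A = ⊥ := by
  refine eq_bot_iff.mpr ?_
  rintro _ ⟨θ, rfl⟩
  induction θ with
  | zero => simp
  | add θ θ' hθ hθ' => rw [map_add]; exact add_mem hθ hθ'
  | tmul a b =>
    obtain ⟨_, r, rfl⟩ := b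
    refine ⟨r • a, ?_⟩
    change (r • a) ⊗ₜ[R] (1 : B) = a ⊗ₜ[R] algebraMap R B r
    rw [TensorProduct.smul_tmul, ← Algebra.algebraMap_eq_smul_one]

theorem equalizer_map_id_eq_baseChange [CommRing R] [CommRing A] [CommRing B] [CommRing C]
    [Algebra R A] [Algebra R B] [Algebra R C] [Module.Flat R A] (f g : B →ₐ[R] C) :
    AlgHom.equalizer (Algebra.TensorProduct.map (AlgHom.id A A) f)
        (Algebra.TensorProduct.map (AlgHom.id A A) g) =
      (AlgHom.equalizer f g).baseChange A := by
  ext θ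
  have h := Module.Flat.eqLocus_lTensor_eq A A f.toLinearMap g.toLinearMap
  exact SetLike.ext_iff.mp h θ

end BaseChange

section Frobenius

variable {F A R : Type*} [Field F] [Fintype F] [CommRing A] [CommRing R] [Algebra F A] [Algebra F R]

theorem eq_map_id_frobeniusAlgHom {σ : A ⊗[F] R →ₐ[A] A ⊗[F] R}
    (hσ : ∀ (a : A) (x : R), σ (a ⊗ₜ[F] x) = a ⊗ₜ[F] (x ^ Fintype.card F)) :
    σ = Algebra.TensorProduct.map (AlgHom.id A A) (FiniteField.frobeniusAlgHom F R) :=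
  Algebra.TensorProduct.ext' fun a x => by simp [hσ]

variable (F A R)

theorem bijective_map_id_frobeniusAlgHom (p : ℕ) [ExpChar R p] [PerfectRing R p] :
    Function.Bijective
      (Algebra.TensorProduct.map (AlgHom.id A A) (FiniteField.frobeniusAlgHom F R)) :=
  (Algebra.TensorProduct.congr AlgEquiv.refl (FiniteField.frobeniusAlgEquiv F R p)).bijective

theorem equalizer_map_id_frobeniusAlgHom_id [IsDomain R] :
    AlgHom.equalizer
      (Algebra.TensorProduct.map (AlgHom.id A A) (FiniteField.frobeniusAlgHom F R))
      (AlgHom.id A (A ⊗[F] R)) = ⊥ := by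
  rw [← Algebra.TensorProduct.map_id, equalizer_map_id_eq_baseChange,
    equalizer_frobeniusAlgHom_id, subalgebra_baseChange_bot]

end Frobenius

theorem stmt_4_general {F k L : Type*} [Field F] [Fintype F] [CommRing k] [IsDomain k] [CommRing L]
    [Algebra F k] [Algebra F L] (p : ℕ) [ExpChar k p] [PerfectRing k p]
    (q : ℕ) (hq : Fintype.card F = q)
    (σ : (L ⊗[F] k) →ₐ[L] (L ⊗[F] k))
    (hσ : ∀ (c : L) (x : k), σ (c ⊗ₜ[F] x) = c ⊗ₜ[F] (x ^ q)) :
    Function.Bijective σ ∧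
      ∀ θ : L ⊗[F] k, σ θ = θ ↔ θ ∈ (algebraMap L (L ⊗[F] k)).range := by
  subst hq
  obtain rfl := eq_map_id_frobeniusAlgHom hσ
  exact ⟨bijective_map_id_frobeniusAlgHom F L k p,
    SetLike.ext_iff.mp (equalizer_map_id_frobeniusAlgHom_id F L k)⟩

/-- The map `σ : A → A` determined by `σ(x ⊗ c) = x^q ⊗ c` is an
automorphism of `A = k ⊗_{𝔽_q} L` as an `L`-algebra (here written as `L ⊗[F] k`, with the
Frobenius acting on the `k`-factor), and its fixed subalgebra `{θ : σ(θ) = θ}` is exactly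
the canonical image of `L` in `A`. -/
theorem stmt_4 {F k L : Type*} [Field F] [Fintype F] [Field k] [Field L]
    [Algebra F k] [Algebra F L] [FiniteDimensional F k] [FiniteDimensional F L]
    (q : ℕ) (hq : Fintype.card F = q)
    (σ : (L ⊗[F] k) →ₐ[L] (L ⊗[F] k))
    (hσ : ∀ (c : L) (x : k), σ (c ⊗ₜ[F] x) = c ⊗ₜ[F] (x ^ q)) :
    Function.Bijective σ ∧
      ∀ θ : L ⊗[F] k, σ θ = θ ↔ θ ∈ (algebraMap L (L ⊗[F] k)).range := by
  have : Finite k := Module.finite_of_finite F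
  exact stmt_4_general (ringExpChar k) q hq σ hσ
end

section
/- Let p be a prime, q = p^t, and let a ∈ 𝔽_q satisfy Tr_{𝔽_q/𝔽_p}(a) ≠ 0 (so that X^p − X − a is irreducible over 𝔽_q). Let α be a root of X^p − X − a in an extension field of 𝔽_q. Then the polynomial X^p − X − a·α^{p−1} is irreducible over the field 𝔽_q(α). -/
open Polynomial IntermediateField

/-!
Suppose `b ∈ F(α)` satisfies `b ^ p - b = a * α ^ (p - 1)`. The trace of `F(α) / F` commutes with
the `p`-th power, and Euler's formula `Tr (α ^ (p - 1) / f'(α)) = 1` for the minimal polynomial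
`f = X ^ p - X - a`, whose derivative is `-1`, gives `Tr (α ^ (p - 1)) = -1`. Hence `c = -Tr b`
satisfies `c ^ p - c = a`, which over a finite field forces the absolute trace of `a` to vanish.
So `X ^ p - X - a * α ^ (p - 1)` has no root in `F(α)`. It is then irreducible by another trace
argument: if `x ^ p - x = c ∈ K`, then `t = Tr x` from `K(x)` to `K` satisfies
`t ^ p - t = [K(x) : K] * c`, so `c` is of the form `y ^ p - y` in `K` unless `p ∣ [K(x) : K]`.
-/

theorem sum_range_pow_sub_self_pow {R : Type*} [CommRing R] (p : ℕ) [ExpChar R p] (c : R) (n : ℕ) :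
    ∑ i ∈ Finset.range n, (c ^ p - c) ^ p ^ i = c ^ p ^ n - c := by
  calc ∑ i ∈ Finset.range n, (c ^ p - c) ^ p ^ i
      = ∑ i ∈ Finset.range n, (c ^ p ^ (i + 1) - c ^ p ^ i) := by
        simp only [sub_pow_expChar_pow, ← pow_mul, ← pow_succ']
    _ = c ^ p ^ n - c := by rw [Finset.sum_range_sub (fun i ↦ c ^ p ^ i), pow_zero, pow_one]

theorem pow_sub_self_ne_of_sum_range_pow_ne_zero {F : Type*} [Field F] [Fintype F] {p t : ℕ}
    [ExpChar F p] (hcard : Fintype.card F = p ^ t) {a : F}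
    (htr : ∑ i ∈ Finset.range t, a ^ p ^ i ≠ 0) (c : F) : c ^ p - c ≠ a := by
  rintro rfl
  rw [sum_range_pow_sub_self_pow, ← hcard, FiniteField.pow_card, sub_self] at htr
  exact htr rfl

section Trace

variable {K L : Type*} [Field K] [Field L] [Algebra K L]

theorem trace_pow_expChar [FiniteDimensional K L] (p : ℕ) [ExpChar K p] (x : L) :
    Algebra.trace K L (x ^ p) = Algebra.trace K L x ^ p := by
  by_cases hsep : Algebra.IsSeparable K L
  · let E := AlgebraicClosure K
    have : ExpChar E p := expChar_of_injective_algebraMap (algebraMap K E).injective p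
    apply (algebraMap K E).injective
    calc algebraMap K E (Algebra.trace K L (x ^ p))
        = ∑ σ : L →ₐ[K] E, frobenius E p (σ x) := by
          simp only [trace_eq_sum_embeddings E, map_pow, frobenius_def]
      _ = algebraMap K E (Algebra.trace K L x ^ p) := by
          rw [← map_sum, ← trace_eq_sum_embeddings E, frobenius_def, map_pow]
  · simp [Algebra.trace_eq_zero_of_not_isSeparable hsep, zero_pow (expChar_ne_zero K p)]

theorem trace_pow_sub_self [FiniteDimensional K L] (p : ℕ) [ExpChar K p] (x : L) :
    Algebra.trace K L (x ^ p - x) = Algebra.trace K L x ^ p - Algebra.trace K L x := by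
  rw [map_sub, trace_pow_expChar]

theorem trace_gen_pow_div_aeval_derivative_minpoly [Algebra.IsSeparable K L] (pb : PowerBasis K L) :
    Algebra.trace K L (pb.gen ^ (pb.dim - 1) / aeval pb.gen (derivative (minpoly K pb.gen))) =
      1 := by
  have : FiniteDimensional K L := pb.finite
  have hint : IsIntegral K pb.gen := pb.isIntegral_gen
  let last : Fin pb.dim := ⟨pb.dim - 1, Nat.sub_lt pb.dim_pos one_pos⟩
  have hcoeff : (minpolyDiv K pb.gen).coeff last = 1 := by
    have hmonic := minpolyDiv_monic hint
    rwa [Monic, leadingCoeff, natDegree_minpolyDiv, pb.natDegree_minpoly] at hmonic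
  have hdual := pb.basis.trace_mul_traceDual last last
  rwa [Module.Basis.traceDual_powerBasis_eq, hcoeff, pb.basis_eq_pow, if_pos rfl,
    mul_one_div] at hdual

end Trace

section ArtinSchreier

section CommRing

variable {R : Type*} [CommRing R]

theorem derivative_X_pow_char_sub_X_sub_C (p : ℕ) [CharP R p] (c : R) :
    derivative (X ^ p - X - C c) = -1 := by
  simp [derivative_X_pow]

variable [Nontrivial R] {n : ℕ}

theorem monic_X_pow_sub_X_sub_C (hn : 1 < n) (c : R) : (X ^ n - X - C c).Monic := by
  rw [sub_sub]
  exact monic_X_pow_sub (by rw [degree_X_add_C]; exact_mod_cast hn)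

theorem natDegree_X_pow_sub_X_sub_C (hn : 1 < n) (c : R) : (X ^ n - X - C c).natDegree = n := by
  rw [sub_sub, natDegree_sub_eq_left_of_natDegree_lt, natDegree_X_pow]
  rwa [natDegree_X_add_C, natDegree_X_pow]

theorem isIntegral_of_pow_sub_self_eq {A : Type*} [Ring A] [Algebra R A] (hn : 1 < n) {c : R}
    {x : A} (hx : x ^ n - x = algebraMap R A c) : IsIntegral R x :=
  ⟨_, monic_X_pow_sub_X_sub_C hn c, by simp [hx]⟩

end CommRing

variable {K L : Type*} [Field K] [Field L] [Algebra K L] {p : ℕ} [Fact p.Prime] [CharP K p] {c : K}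

theorem dvd_finrank_of_pow_sub_self_eq [FiniteDimensional K L] (hc : ∀ y : K, y ^ p - y ≠ c)
    {x : L} (hx : x ^ p - x = algebraMap K L c) : p ∣ Module.finrank K L := by
  set d := Module.finrank K L
  set t := Algebra.trace K L x
  have htrace : t ^ p - t = d * c := by
    rw [← trace_pow_sub_self, hx, Algebra.trace_algebraMap, nsmul_eq_mul]
  rw [← CharP.cast_eq_zero_iff K p]
  by_contra hd
  have hdp : (d : K) ^ p = d := map_natCast (frobenius K p) d
  apply hc (t / d)
  rw [div_pow, hdp, ← sub_div, htrace, mul_div_cancel_left₀ c hd]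

theorem minpoly_eq_X_pow_sub_X_sub_C (hc : ∀ y : K, y ^ p - y ≠ c)
    {x : L} (hx : x ^ p - x = algebraMap K L c) : minpoly K x = X ^ p - X - C c := by
  have hp : 1 < p := (Fact.out : p.Prime).one_lt
  have hmonic : (X ^ p - X - C c).Monic := monic_X_pow_sub_X_sub_C hp c
  have hroot : aeval x (X ^ p - X - C c) = 0 := by simp [hx]
  have hint : IsIntegral K x := isIntegral_of_pow_sub_self_eq hp hx
  have := adjoin.finiteDimensional hint
  have hgen : AdjoinSimple.gen K x ^ p - AdjoinSimple.gen K x = algebraMap K K⟮x⟯ c :=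
    Subtype.ext hx
  have hdvd : p ∣ (minpoly K x).natDegree := by
    rw [← adjoin.finrank hint]
    exact dvd_finrank_of_pow_sub_self_eq hc hgen
  have hle : (X ^ p - X - C c).natDegree ≤ (minpoly K x).natDegree := by
    rw [natDegree_X_pow_sub_X_sub_C hp]
    exact Nat.le_of_dvd (minpoly.natDegree_pos hint) hdvd
  exact (eq_of_monic_of_dvd_of_natDegree_le (minpoly.monic hint) hmonic
    (minpoly.dvd K x hroot) hle).symm

theorem irreducible_X_pow_sub_X_sub_C (hc : ∀ y : K, y ^ p - y ≠ c) :
    Irreducible (X ^ p - X - C c : K[X]) := by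
  have hp : 1 < p := (Fact.out : p.Prime).one_lt
  have hdeg : (X ^ p - X - C c).degree ≠ 0 := by
    apply degree_ne_of_natDegree_ne
    rw [natDegree_X_pow_sub_X_sub_C hp]
    exact ne_zero_of_lt hp
  obtain ⟨x, hroot⟩ := IsAlgClosed.exists_aeval_eq_zero (AlgebraicClosure K) _ hdeg
  have hx : x ^ p - x = algebraMap K _ c := by simpa [sub_eq_zero] using hroot
  rw [← minpoly_eq_X_pow_sub_X_sub_C hc hx]
  exact minpoly.irreducible (Algebra.IsIntegral.isIntegral x)

theorem trace_gen_pow_sub_one_eq_neg_one (hc : ∀ y : K, y ^ p - y ≠ c)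
    {x : L} (hx : x ^ p - x = algebraMap K L c) :
    Algebra.trace K K⟮x⟯ (AdjoinSimple.gen K x ^ (p - 1)) = -1 := by
  have hp : 1 < p := (Fact.out : p.Prime).one_lt
  have hmin := minpoly_eq_X_pow_sub_X_sub_C hc hx
  have hderiv : derivative (minpoly K x) = -1 := by rw [hmin, derivative_X_pow_char_sub_X_sub_C]
  have hirr : Irreducible (minpoly K x) := hmin ▸ irreducible_X_pow_sub_X_sub_C hc
  have hint : IsIntegral K x := isIntegral_of_pow_sub_self_eq hp hx
  have hdim : (minpoly K x).natDegree = p := by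
    rw [hmin, natDegree_X_pow_sub_X_sub_C hp]
  have hsep : IsSeparable K x := by
    rw [IsSeparable, separable_iff_derivative_ne_zero hirr, hderiv]
    exact neg_ne_zero.mpr one_ne_zero
  have := adjoin.finiteDimensional hint
  have : Algebra.IsSeparable K K⟮x⟯ := (isSeparable_adjoin_simple_iff_isSeparable K L).mpr hsep
  have heuler := trace_gen_pow_div_aeval_derivative_minpoly (adjoin.powerBasis hint)
  rw [adjoin.powerBasis_gen, adjoin.powerBasis_dim, minpoly_gen, hderiv, hdim, map_neg, map_one,
    div_neg, div_one, map_neg] at heuler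
  exact neg_eq_iff_eq_neg.mp heuler

end ArtinSchreier

theorem stmt_8_general {F Ω : Type*} [Field F] [Field Ω] [Algebra F Ω] {p : ℕ} [Fact p.Prime]
    [CharP F p] {a : F} (ha : ∀ c : F, c ^ p - c ≠ a) {α : Ω}
    (hα : α ^ p - α = algebraMap F Ω a) :
    Irreducible ((X : (F⟮α⟯)[X]) ^ p - X -
      C (algebraMap F F⟮α⟯ a * (IntermediateField.AdjoinSimple.gen F α) ^ (p - 1))) := by
  have : CharP F⟮α⟯ p := charP_of_injective_algebraMap (algebraMap F F⟮α⟯).injective p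
  have : FiniteDimensional F F⟮α⟯ :=
    adjoin.finiteDimensional (isIntegral_of_pow_sub_self_eq (Fact.out : p.Prime).one_lt hα)
  apply irreducible_X_pow_sub_X_sub_C
  intro b hb
  set τ := Algebra.trace F F⟮α⟯ b
  have hτ : τ ^ p - τ = -a := by
    rw [← trace_pow_sub_self, hb, ← Algebra.smul_def, map_smul,
      trace_gen_pow_sub_one_eq_neg_one ha hα, smul_eq_mul, mul_neg_one]
  apply ha (-τ)
  rw [← frobenius_def, map_neg, frobenius_def, neg_sub_neg, ← neg_sub, hτ, neg_neg]

/-- Let `p` be prime, `q = p^t`, `a ∈ 𝔽_q` with nonzero absolute trace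
(so `X^p − X − a` is irreducible over `𝔽_q`), and let `α` be a root of `X^p − X − a` in an
extension field of `𝔽_q`. Then `X^p − X − a·α^{p−1}` is irreducible over `𝔽_q(α)`. -/
theorem stmt_8 {F : Type*} [Field F] [Fintype F] (p t : ℕ) (hp : p.Prime) [CharP F p]
    (hcard : Fintype.card F = p ^ t) (a : F)
    (htr : ∑ i ∈ Finset.range t, a ^ p ^ i ≠ 0)
    {Ω : Type*} [Field Ω] [Algebra F Ω] (α : Ω)
    (hα : α ^ p - α = algebraMap F Ω a) :
    Irreducible ((X : (F⟮α⟯)[X]) ^ p - X -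
      C (algebraMap F F⟮α⟯ a * (IntermediateField.AdjoinSimple.gen F α) ^ (p - 1))) := by
  have : Fact p.Prime := ⟨hp⟩
  exact stmt_8_general (pow_sub_self_ne_of_sum_range_pow_ne_zero hcard htr) hα
end

section
/- Let F be a finite field with Q elements, let v be a prime dividing Q − 1 (so v is different from the characteristic of F), and let t be the v-adic valuation of Q − 1. Let K be an extension field of F of degree v^d for some integer d ≥ 0, and let η ∈ F^× satisfy η^{(Q−1)/v} ≠ 1 (i.e. η is not a v-th power in F). Then η possesses a v^d-th root in K, and every θ ∈ K^× with θ^{v^d} = η has multiplicative order whose v-adic valuation equals t + d. -/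
/-!
The norm `K → F` is surjective and equals the power map with exponent `∑ i < v ^ d, Q ^ i`. This
exponent is divisible by `v ^ d` because `Q ≡ 1` modulo `v`, so every element of `F` is a
`v ^ d`-th power in `K`. A non-`v`-th power `η` carries the full `v`-part of `Q - 1` in its order,
and since `v` divides that order, each extraction of a `v`-th root multiplies the order by
exactly `v`.
-/

open Finset

theorem geom_sum_range_mul {R : Type*} [Semiring R] (x : R) (m n : ℕ) :
    ∑ i ∈ range (m * n), x ^ i = (∑ i ∈ range m, x ^ i) * ∑ j ∈ range n, (x ^ m) ^ j := by
  induction n with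
  | zero => simp
  | succ n ih =>
    rw [Nat.mul_succ, sum_range_add, ih, sum_range_succ, mul_add, sum_mul (range m) _ ((x ^ m) ^ n)]
    simp only [← pow_mul, ← pow_add, add_comm]

theorem natCast_pow_dvd_geom_sum {R : Type*} [CommRing R] {x : R} {n : ℕ}
    (h : (n : R) ∣ x - 1) (d : ℕ) :
    (n : R) ^ d ∣ ∑ i ∈ range (n ^ d), x ^ i := by
  induction d with
  | zero => simp
  | succ d ih =>
    have hpow : (n : R) ∣ x ^ n ^ d - 1 := h.trans (sub_one_dvd_pow_sub_one x _)
    have hsum : (n : R) ∣ ∑ j ∈ range n, (x ^ n ^ d) ^ j := by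
      simpa only [one_pow, mul_one] using dvd_geom_sum₂_self hpow
    rw [pow_succ, pow_succ, geom_sum_range_mul]
    exact mul_dvd_mul ih hsum

theorem exists_pow_eq_algebraMap_of_dvd_geom_sum {F K : Type*} [Field F] [Field K] [Algebra F K]
    [Finite K] {n : ℕ} (h : n ∣ ∑ i ∈ range (Module.finrank F K), Nat.card F ^ i) (a : F) :
    ∃ θ : K, θ ^ n = algebraMap F K a := by
  obtain ⟨c, hc⟩ := h
  obtain ⟨x, rfl⟩ := FiniteField.norm_surjective F K a
  exact ⟨x ^ c, by rw [FiniteField.algebraMap_norm_eq_pow_sum, hc, pow_mul']⟩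

theorem exists_pow_eq_algebraMap_of_finrank_eq_pow {F K : Type*} [Field F] [Finite F] [Field K]
    [Algebra F K] {n d : ℕ} (hn : n ∣ Nat.card F - 1) (hd : Module.finrank F K = n ^ d) (a : F) :
    ∃ θ : K, θ ^ n ^ d = algebraMap F K a := by
  have hn0 : n ≠ 0 := ne_zero_of_dvd_ne_zero (Nat.sub_ne_zero_of_lt Finite.one_lt_card) hn
  have : Module.Finite F K := Module.finite_of_finrank_pos (hd ▸ pow_pos hn0.pos d)
  have : Finite K := Module.finite_of_finite F
  have hn' : (n : ℤ) ∣ (Nat.card F : ℤ) - 1 := by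
    simpa only [Nat.cast_pred Nat.card_pos] using Int.natCast_dvd_natCast.2 hn
  apply exists_pow_eq_algebraMap_of_dvd_geom_sum
  rw [hd]
  exact_mod_cast natCast_pow_dvd_geom_sum hn' d

section OrderOf

variable {M : Type*} [Monoid M] {x : M}

theorem orderOf_eq_mul_orderOf_pow {n : ℕ} (h : n ∣ orderOf (x ^ n)) :
    orderOf x = n * orderOf (x ^ n) := by
  have hn : n ≠ 0 := by
    rintro rfl
    simp at h
  have hx : n ∣ orderOf x := h.trans (orderOf_pow_dvd n)
  rw [orderOf_pow_of_dvd hn hx, Nat.mul_div_cancel' hx]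

theorem orderOf_eq_pow_mul_orderOf_pow_pow {n d : ℕ} (h : n ∣ orderOf (x ^ n ^ d)) :
    orderOf x = n ^ d * orderOf (x ^ n ^ d) := by
  induction d with
  | zero => simp
  | succ d ih =>
    rw [pow_succ, pow_mul] at h ⊢
    have hstep := orderOf_eq_mul_orderOf_pow h
    rw [ih (hstep ▸ dvd_mul_right n _), hstep, mul_assoc]

theorem factorization_orderOf_eq_of_pow_div_ne_one {p N : ℕ} (hN : N ≠ 0) (hx : x ^ N = 1)
    (hxp : x ^ (N / p) ≠ 1) : (orderOf x).factorization p = N.factorization p := by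
  obtain ⟨k, rfl⟩ := orderOf_dvd_of_pow_eq_one hx
  have hpk : ¬ p ∣ k := fun hpk ↦ hxp <| by
    rw [Nat.mul_div_assoc _ hpk, pow_mul, pow_orderOf_eq_one, one_pow]
  obtain ⟨ho, hk⟩ := mul_ne_zero_iff.1 hN
  rw [Nat.factorization_mul ho hk, Finsupp.add_apply, Nat.factorization_eq_zero_of_not_dvd hpk,
    add_zero]

theorem factorization_orderOf_of_prime_dvd_orderOf_pow {p d : ℕ} (hp : p.Prime)
    (h0 : orderOf (x ^ p ^ d) ≠ 0) (h : p ∣ orderOf (x ^ p ^ d)) :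
    (orderOf x).factorization p = (orderOf (x ^ p ^ d)).factorization p + d := by
  rw [orderOf_eq_pow_mul_orderOf_pow_pow h,
    Nat.factorization_mul (pow_ne_zero d hp.ne_zero) h0, Finsupp.add_apply,
    hp.factorization_pow, Finsupp.single_eq_same, add_comm]

end OrderOf

/-- Let `F` be a finite field with `Q` elements, `v` a prime dividing
`Q − 1`, and `t` the `v`-adic valuation of `Q − 1`. Let `K/F` be an extension of degree
`v^d` and let `η ∈ F^×` satisfy `η^{(Q−1)/v} ≠ 1` (i.e. `η` is not a `v`-th power in `F`).
Then `η` has a `v^d`-th root in `K`, and every `θ ∈ K^×` with `θ^{v^d} = η` has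
multiplicative order of `v`-adic valuation exactly `t + d`. -/
theorem stmt_11 {F K : Type*} [Field F] [Fintype F] [Field K] [Algebra F K]
    (Q : ℕ) (hQ : Fintype.card F = Q)
    (v : ℕ) (hv : v.Prime) (hvQ : v ∣ Q - 1)
    (t : ℕ) (ht : t = (Q - 1).factorization v)
    (d : ℕ) (hd : Module.finrank F K = v ^ d)
    (η : F) (hη0 : η ≠ 0) (hη : η ^ ((Q - 1) / v) ≠ 1) :
    (∃ θ : K, θ ^ v ^ d = algebraMap F K η) ∧
      ∀ θ : K, θ ≠ 0 → θ ^ v ^ d = algebraMap F K η →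
        (orderOf θ).factorization v = t + d := by
  subst hQ ht
  refine ⟨exists_pow_eq_algebraMap_of_finrank_eq_pow (by rwa [Nat.card_eq_fintype_card]) hd η,
    fun θ _ hθ ↦ ?_⟩
  have hQ0 : Fintype.card F - 1 ≠ 0 := Nat.sub_ne_zero_of_lt Fintype.one_lt_card
  have hηQ : η ^ (Fintype.card F - 1) = 1 := FiniteField.pow_card_sub_one_eq_one η hη0
  have hord : orderOf (θ ^ v ^ d) = orderOf η := by
    rw [hθ]
    exact orderOf_injective (algebraMap F K).toMonoidHom (algebraMap F K).injective η
  have hval : (orderOf η).factorization v = (Fintype.card F - 1).factorization v :=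
    factorization_orderOf_eq_of_pow_div_ne_one hQ0 hηQ hη
  have hη_ord : orderOf η ≠ 0 := ne_zero_of_dvd_ne_zero hQ0 (orderOf_dvd_of_pow_eq_one hηQ)
  have hv_ord : v ∣ orderOf η := Nat.dvd_of_factorization_pos
    (hval ▸ (hv.factorization_pos_of_dvd hQ0 hvQ).ne')
  rw [← hval, ← hord]
  exact factorization_orderOf_of_prime_dvd_orderOf_pow hv (hord ▸ hη_ord) (hord ▸ hv_ord)
end

section
/- Let 𝔽_q be a finite field and Ω an extension field of 𝔽_q. Let α, β ∈ Ω be algebraic over 𝔽_q with degrees a = [𝔽_q(α):𝔽_q] and b = [𝔽_q(β):𝔽_q] satisfying gcd(a, b) = 1. Then [𝔽_q(α + β):𝔽_q] = a·b; moreover, if α ≠ 0 and β ≠ 0, then [𝔽_q(α·β):𝔽_q] = a·b. -/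
open IntermediateField

/-!
The degree of `x` over `𝔽_q` is the length of the orbit of `x` under the Frobenius endomorphism.
For an endomorphism `f` of a magma, whenever `f^[n]` fixes two of `x`, `y` and `x * y` it fixes the
third one, provided that `x` and `y` can be cancelled. So each of the three orbit lengths divides
the least common multiple of the other two, and coprime orbit lengths of `x` and `y` multiply.
-/

section MinimalPeriod

open Function

variable {M E : Type*} [Mul M] [FunLike E M M] [MulHomClass E M M] {f : E} {x y : M} {n : ℕ}

@[to_additive]
theorem isPeriodicPt_mul (hx : IsPeriodicPt f n x) (hy : IsPeriodicPt f n y) :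
    IsPeriodicPt f n (x * y) := by
  rw [IsPeriodicPt, IsFixedPt, iterate_map_mul, hx.eq, hy.eq]

@[to_additive]
theorem isPeriodicPt_left_of_mul (hy_reg : IsRightRegular y) (hxy : IsPeriodicPt f n (x * y))
    (hy : IsPeriodicPt f n y) : IsPeriodicPt f n x := by
  refine hy_reg (?_ : f^[n] x * y = x * y)
  calc f^[n] x * y = f^[n] x * f^[n] y := by rw [hy.eq]
    _ = f^[n] (x * y) := (iterate_map_mul f n x y).symm
    _ = x * y := hxy

@[to_additive]
theorem isPeriodicPt_right_of_mul (hx_reg : IsLeftRegular x) (hxy : IsPeriodicPt f n (x * y))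
    (hx : IsPeriodicPt f n x) : IsPeriodicPt f n y := by
  refine hx_reg (?_ : x * f^[n] y = x * y)
  calc x * f^[n] y = f^[n] x * f^[n] y := by rw [hx.eq]
    _ = f^[n] (x * y) := (iterate_map_mul f n x y).symm
    _ = x * y := hxy

theorem isPeriodicPt_lcm_minimalPeriod_left {α : Type*} (g : α → α) (a : α) (m : ℕ) :
    IsPeriodicPt g ((minimalPeriod g a).lcm m) a :=
  (isPeriodicPt_minimalPeriod g a).trans_dvd (Nat.dvd_lcm_left _ _)

theorem isPeriodicPt_lcm_minimalPeriod_right {α : Type*} (g : α → α) (a : α) (m : ℕ) :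
    IsPeriodicPt g (m.lcm (minimalPeriod g a)) a :=
  (isPeriodicPt_minimalPeriod g a).trans_dvd (Nat.dvd_lcm_right _ _)

variable (f x y)

@[to_additive]
theorem minimalPeriod_mul_dvd_lcm :
    minimalPeriod f (x * y) ∣ (minimalPeriod f x).lcm (minimalPeriod f y) :=
  (isPeriodicPt_mul (isPeriodicPt_lcm_minimalPeriod_left f x _)
    (isPeriodicPt_lcm_minimalPeriod_right f y _)).minimalPeriod_dvd

variable {x y}

@[to_additive]
theorem minimalPeriod_left_dvd_lcm_mul (x : M) (hy : IsRightRegular y) :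
    minimalPeriod f x ∣ (minimalPeriod f (x * y)).lcm (minimalPeriod f y) :=
  (isPeriodicPt_left_of_mul hy (isPeriodicPt_lcm_minimalPeriod_left f (x * y) _)
    (isPeriodicPt_lcm_minimalPeriod_right f y _)).minimalPeriod_dvd

@[to_additive]
theorem minimalPeriod_right_dvd_lcm_mul (hx : IsLeftRegular x) (y : M) :
    minimalPeriod f y ∣ (minimalPeriod f (x * y)).lcm (minimalPeriod f x) :=
  (isPeriodicPt_right_of_mul hx (isPeriodicPt_lcm_minimalPeriod_left f (x * y) _)
    (isPeriodicPt_lcm_minimalPeriod_right f x _)).minimalPeriod_dvd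

variable {f}

@[to_additive]
theorem minimalPeriod_mul_of_coprime (hx : IsLeftRegular x) (hy : IsRightRegular y)
    (hxy : (minimalPeriod f x).Coprime (minimalPeriod f y)) :
    minimalPeriod f (x * y) = minimalPeriod f x * minimalPeriod f y := by
  have hx_dvd : minimalPeriod f x ∣ minimalPeriod f (x * y) :=
    hxy.dvd_of_dvd_mul_right <|
      (minimalPeriod_left_dvd_lcm_mul f x hy).trans (Nat.lcm_dvd_mul _ _)
  have hy_dvd : minimalPeriod f y ∣ minimalPeriod f (x * y) :=
    hxy.symm.dvd_of_dvd_mul_right <|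
      (minimalPeriod_right_dvd_lcm_mul f hx y).trans (Nat.lcm_dvd_mul _ _)
  refine Nat.dvd_antisymm ?_ (hxy.mul_dvd_of_dvd_of_dvd hx_dvd hy_dvd)
  exact (minimalPeriod_mul_dvd_lcm f x y).trans (Nat.lcm_dvd_mul _ _)

end MinimalPeriod

section Frobenius

open Function Polynomial FiniteField

variable {K R : Type*} [Field K] [Fintype K] [CommRing R] [Algebra K R]

theorem isPeriodicPt_frobeniusAlgHom_iff_pow_eq {n : ℕ} {x : R} :
    IsPeriodicPt (frobeniusAlgHom K R) n x ↔ x ^ Fintype.card K ^ n = x := by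
  rw [IsPeriodicPt, IsFixedPt, coe_frobeniusAlgHom, pow_iterate]

theorem minimalPeriod_frobeniusAlgHom [IsDomain R] {x : R} (hx : IsIntegral K x) :
    minimalPeriod (frobeniusAlgHom K R) x = (minpoly K x).natDegree := by
  refine Nat.dvd_right_iff_eq.mp fun n ↦ ?_
  calc minimalPeriod (frobeniusAlgHom K R) x ∣ n
    _ ↔ x ^ Fintype.card K ^ n = x := by
      rw [← isPeriodicPt_iff_minimalPeriod_dvd, isPeriodicPt_frobeniusAlgHom_iff_pow_eq]
    _ ↔ minpoly K x ∣ X ^ Nat.card K ^ n - X := by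
      rw [minpoly.dvd_iff, Nat.card_eq_fintype_card, map_sub, map_pow, aeval_X, sub_eq_zero]
    _ ↔ (minpoly K x).natDegree ∣ n :=
      (minpoly.irreducible hx).natDegree_dvd_iff_dvd_X_pow_card_pow_sub_X.symm

theorem finrank_adjoin_eq_minimalPeriod_frobeniusAlgHom {L : Type*} [Field L] [Algebra K L] {x : L}
    (hx : IsIntegral K x) :
    Module.finrank K K⟮x⟯ = minimalPeriod (frobeniusAlgHom K L) x := by
  rw [adjoin.finrank hx, minimalPeriod_frobeniusAlgHom hx]

end Frobenius

/-- Let `𝔽_q` be a finite field and `Ω/𝔽_q` an extension. If `α, β ∈ Ω`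
are algebraic over `𝔽_q` of coprime degrees `a` and `b`, then `[𝔽_q(α+β):𝔽_q] = a·b`;
moreover if `α ≠ 0` and `β ≠ 0` then `[𝔽_q(α·β):𝔽_q] = a·b`. -/
theorem stmt_15 {F Ω : Type*} [Field F] [Finite F] [Field Ω] [Algebra F Ω]
    (α β : Ω) (hα : IsIntegral F α) (hβ : IsIntegral F β)
    (a b : ℕ) (ha : Module.finrank F F⟮α⟯ = a) (hb : Module.finrank F F⟮β⟯ = b)
    (hab : Nat.Coprime a b) :
    Module.finrank F F⟮α + β⟯ = a * b ∧
      (α ≠ 0 → β ≠ 0 → Module.finrank F F⟮α * β⟯ = a * b) := by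
  have := Fintype.ofFinite F
  rw [finrank_adjoin_eq_minimalPeriod_frobeniusAlgHom hα] at ha
  rw [finrank_adjoin_eq_minimalPeriod_frobeniusAlgHom hβ] at hb
  subst ha hb
  rw [finrank_adjoin_eq_minimalPeriod_frobeniusAlgHom (hα.add hβ),
    finrank_adjoin_eq_minimalPeriod_frobeniusAlgHom (hα.mul hβ)]
  refine ⟨minimalPeriod_add_of_coprime (.all α) (.all β) hab, fun hα₀ hβ₀ ↦ ?_⟩
  exact minimalPeriod_mul_of_coprime (IsRegular.of_ne_zero hα₀).left
    (IsRegular.of_ne_zero hβ₀).right hab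
end
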